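/- For all integers n ≥ 3 and 1 ≤ k ≤ n with n + k even, the number of involutions of {1,2,…,n} with exactly k fixed points that contain the pattern 132 exactly once equals ((k+1)/(n-1))·C(n-1, (n+k)/2), i.e. (n-1)·i_n^k(∅;132) = (k+1)·C(n-1, (n+k)/2); when k = 0 or n + k is odd this number is 0. -/

import Mathlib

/-- The number of fixed points of a permutation of `Fin n`. -/
def fixedPts {n : ℕ} (π : Equiv.Perm (Fin n)) : ℕ :=
  (Finset.univ.filter fun i => π i = i).card

/-- A permutation is an involution if it is its own inverse. -/
def IsInvolution {n : ℕ} (π : Equiv.Perm (Fin n)) : Prop :=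
  ∀ i, π (π i) = i

/-- The number of occurrences of the pattern 132 in a permutation of `Fin n`. -/
noncomputable def occ132 {n : ℕ} (π : Equiv.Perm (Fin n)) : ℕ :=
  Nat.card {t : Fin n × Fin n × Fin n //
    t.1 < t.2.1 ∧ t.2.1 < t.2.2 ∧ (π t.1 < π t.2.2 ∧ π t.2.2 < π t.2.1)}

/-- `i_n^k(∅;132)`: the number of involutions of `{1, …, n}` with exactly `k` fixed
points containing the pattern 132 exactly once. -/
noncomputable def iCountOnce132 (n k : ℕ) : ℕ :=
  Nat.card {π : Equiv.Perm (Fin n) // IsInvolution π ∧ occ132 π = 1 ∧ fixedPts π = k}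

/-!
If an involution with at most one occurrence of 132 has enough fixed points, then it maps the
positions up to its last fixed point `x` onto the largest values. Removing `x` leaves an involution
of `n - 1` points with one fixed point less, the same occurrences and a cut at `x`, at least half
way through. An involution whose last position is exchanged with `j` restricts to one with a cut at
`j`, and the removed pair accounts for the occurrences `(a, j, last)`: none if `2 j ≤ n - 2`, one if
the cut is just beyond the centre. A cut at `j` goes with one at the mirror image of `j`, so the
cuts in the first half are counted by the cuts in the second half, that is, by the involutions with
one more fixed point. Writing `a n k` and `e n k` for the numbers of involutions with `k` fixed
points and no, respectively one, occurrence of 132, this gives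
`a n k = a (n - 1) (k - 1) + a (n - 1) (k + 1)`, and the same recurrence for `e n k` with an extra
term `a (n - 3) 0` if `k = 1`. As `e n 0 = 0`, it follows that `e n k = a (n - 2) k`, which is a
ballot number.
-/

section

open Equiv (Perm)

open Finset

variable {n : ℕ}

theorem IsInvolution.even_add_fixedPts {f : Perm (Fin n)} (hf : IsInvolution f) :
    Even (n + fixedPts f) := by
  have hsq : f ^ 2 = 1 := Equiv.ext fun i ↦ by simp [sq, hf i]
  have hmoved : Even #f.support := even_iff_two_dvd.2 (Perm.two_dvd_card_support hsq)
  have hsplit : fixedPts f + #f.support = n := by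
    simpa [fixedPts, Perm.support] using
      card_filter_add_card_filter_not (s := (univ : Finset (Fin n))) (fun i ↦ f i = i)
  grind

/-! ### Occurrences of 132 -/

/-- The positions `a`, `b`, `c` carry an occurrence of the pattern 132 in `f`. -/
def IsOcc132 (f : Perm (Fin n)) (a b c : Fin n) : Prop :=
  a < b ∧ b < c ∧ f a < f c ∧ f c < f b

open Classical in
/-- The finite set of all occurrences of 132 in `f`, whose cardinality is `occ132 f`. -/
noncomputable def occurrences132 (f : Perm (Fin n)) : Finset (Fin n × Fin n × Fin n) :=
  {t | IsOcc132 f t.1 t.2.1 t.2.2}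

@[simp]
theorem mem_occurrences132 {f : Perm (Fin n)} {a b c : Fin n} :
    (a, b, c) ∈ occurrences132 f ↔ IsOcc132 f a b c := by
  simp [occurrences132]

theorem card_occurrences132 (f : Perm (Fin n)) : #(occurrences132 f) = occ132 f :=
  (Nat.subtype_card _ fun _ ↦ mem_occurrences132).symm

theorem occ132_pos {f : Perm (Fin n)} {a b c : Fin n} (h : IsOcc132 f a b c) : 0 < occ132 f := by
  rw [← card_occurrences132, card_pos]
  exact ⟨_, mem_occurrences132.2 h⟩

theorem eq_of_occ132_le_one {f : Perm (Fin n)} (hf : occ132 f ≤ 1) {a b c a' b' c' : Fin n}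
    (h : IsOcc132 f a b c) (h' : IsOcc132 f a' b' c') : a = a' ∧ b = b' ∧ c = c' := by
  rw [← card_occurrences132] at hf
  simpa using card_le_one.1 hf _ (mem_occurrences132.2 h) _ (mem_occurrences132.2 h')

theorem IsOcc132.conj {f : Perm (Fin n)} (hf : IsInvolution f) {a b c : Fin n}
    (h : IsOcc132 f a b c) : IsOcc132 f (f a) (f c) (f b) := by
  obtain ⟨hab, hbc, hac, hcb⟩ := h
  simpa only [IsOcc132, hf _] using ⟨hac, hcb, hab, hbc⟩

theorem fixedPts_pos_of_occ132_eq_one {f : Perm (Fin n)} (hf : IsInvolution f)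
    (h : occ132 f = 1) : 0 < fixedPts f := by
  have hpos : 0 < #(occurrences132 f) := by rw [card_occurrences132, h]; exact one_pos
  obtain ⟨⟨a, b, c⟩, habc⟩ := card_pos.1 hpos
  rw [mem_occurrences132] at habc
  have hfa : f a = a := (eq_of_occ132_le_one h.le (habc.conj hf) habc).1
  exact card_pos.2 ⟨a, by simpa using hfa⟩

section Embedding

variable {m : ℕ} {e : Fin m ↪o Fin n} {h : Perm (Fin m)} {f : Perm (Fin n)}

theorem isOcc132_map_iff (hef : ∀ i, f (e i) = e (h i)) {a b c : Fin m} :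
    IsOcc132 f (e a) (e b) (e c) ↔ IsOcc132 h a b c := by
  simp only [IsOcc132, hef, e.lt_iff_lt]

theorem occ132_eq_add_of_map (hef : ∀ i, f (e i) = e (h i))
    {s : Finset (Fin n × Fin n × Fin n)}
    (hs : ∀ a b c, (a, b, c) ∈ s ↔
      IsOcc132 f a b c ∧ ¬ (a ∈ Set.range e ∧ b ∈ Set.range e ∧ c ∈ Set.range e)) :
    occ132 f = occ132 h + #s := by
  classical
  let e₃ := e.toEmbedding.prodMap (e.toEmbedding.prodMap e.toEmbedding)
  have hunion : occurrences132 f = (occurrences132 h).map e₃ ∪ s := by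
    ext ⟨a, b, c⟩
    simp only [mem_union, mem_map, Prod.exists, mem_occurrences132, hs, e₃,
      Function.Embedding.coe_prodMap, Prod.map_apply, RelEmbedding.coe_toEmbedding,
      Prod.mk.injEq]
    constructor
    · intro habc
      by_cases hr : a ∈ Set.range e ∧ b ∈ Set.range e ∧ c ∈ Set.range e
      · obtain ⟨⟨i, rfl⟩, ⟨j, rfl⟩, ⟨k, rfl⟩⟩ := hr
        exact .inl ⟨i, j, k, (isOcc132_map_iff hef).1 habc, rfl, rfl, rfl⟩
      · exact .inr ⟨habc, hr⟩
    · rintro (⟨i, j, k, hijk, rfl, rfl, rfl⟩ | habc)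
      · exact (isOcc132_map_iff hef).2 hijk
      · exact habc.1
  have hdisj : Disjoint ((occurrences132 h).map e₃) s := by
    rw [disjoint_left]
    rintro ⟨a, b, c⟩ hmem hmem'
    obtain ⟨⟨i, j, k⟩, -, hijk⟩ := mem_map.1 hmem
    obtain ⟨rfl, rfl, rfl⟩ : e i = a ∧ e j = b ∧ e k = c := by simpa [e₃] using hijk
    exact ((hs _ _ _).1 hmem').2 ⟨⟨i, rfl⟩, ⟨j, rfl⟩, ⟨k, rfl⟩⟩
  rw [← card_occurrences132 f, ← card_occurrences132 h, hunion, card_union_of_disjoint hdisj,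
    card_map]

end Embedding

/-! ### Cuts -/

/-- `f` is cut at `s` (where `s ≤ n`) if it maps the first `s` positions onto the `s` largest
values, so that it is a skew sum of a permutation of `s` points and one of `n - s` points. -/
def IsCut (f : Perm (Fin n)) (s : ℕ) : Prop :=
  ∀ i : Fin n, (i : ℕ) < s ↔ n ≤ f i + s

instance (f : Perm (Fin n)) (s : ℕ) : Decidable (IsCut f s) :=
  inferInstanceAs (Decidable (∀ i : Fin n, (i : ℕ) < s ↔ n ≤ f i + s))

theorem isCut_self (f : Perm (Fin n)) : IsCut f n := fun i ↦ by omega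

theorem isCut_of_forall_lt {f : Perm (Fin n)} {s : ℕ}
    (hf : ∀ p q : Fin n, (p : ℕ) < s → s ≤ q → f q < f p) : IsCut f s := by
  have hcard : #{q : Fin n | s ≤ q} = n - s := by
    have := card_filter_add_card_filter_not (s := (univ : Finset (Fin n))) (fun q ↦ (q : ℕ) < s)
    simp only [not_lt, Fin.card_filter_val_lt, card_univ, Fintype.card_fin] at this
    omega
  intro i
  refine ⟨fun hi ↦ ?_, fun hi ↦ ?_⟩
  · have := card_le_card_of_injOn (s := {q : Fin n | s ≤ q}) (t := Iio (f i)) f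
      (fun q hq ↦ by simpa using hf i q hi (by simpa using hq)) f.injective.injOn
    rw [Fin.card_Iio, hcard] at this
    omega
  · by_contra! hsi
    have := card_le_card_of_injOn (s := {p : Fin n | (p : ℕ) < s}) (t := Ioi (f i)) f
      (fun p hp ↦ by simpa using hf p i (by simpa using hp) hsi) f.injective.injOn
    rw [Fin.card_Ioi, Fin.card_filter_val_lt] at this
    omega

theorem IsCut.apply_lt_apply {f : Perm (Fin n)} {s : ℕ} (hf : IsCut f s) {p q : Fin n}
    (hp : (p : ℕ) < s) (hq : s ≤ q) : f q < f p := by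
  have := hf p
  have := hf q
  omega

theorem isCut_compl_iff {f : Perm (Fin n)} (hf : IsInvolution f) {s : ℕ} :
    IsCut f (n - s) ↔ IsCut f s := by
  constructor <;>
  · intro hcut i
    have := hcut (f i)
    rw [hf i] at this
    omega

/-- An ascent `p < x < q`, `f p < f q < x` over the last fixed point `x` comes with the second
occurrence `(f p, f q, x)`, and an occurrence starting at `x` remains one when `x` is replaced by
any other fixed point. -/
theorem IsInvolution.isCut_of_isGreatest {f : Perm (Fin n)} (hf : IsInvolution f)
    (hocc : occ132 f ≤ 1) (hlt : occ132 f < fixedPts f) {x : Fin n}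
    (hx : IsGreatest {i | f i = i} x) : IsCut f (x + 1) := by
  obtain ⟨hfx : f x = x, hmax⟩ := hx
  have not_start : ∀ q r, ¬ IsOcc132 f x q r := by
    rintro q r ⟨hxq, hqr, hxr, hrq⟩
    refine hlt.not_ge ?_
    rw [← card_occurrences132]
    refine card_le_card_of_injOn (fun y ↦ (y, q, r)) (fun y hy ↦ ?_)
      fun y _ z _ hyz ↦ congrArg Prod.fst hyz
    have hfy : f y = y := by simpa using hy
    have hyx : y ≤ x := hmax hfy
    exact mem_occurrences132.2
      ⟨hyx.trans_lt hxq, hqr, by rw [hfy]; exact hyx.trans_lt (hfx ▸ hxr), hrq⟩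
  have apply_lt : ∀ q, x < q → f q < x := by
    intro q hxq
    by_contra! hle
    have hne : f q ≠ q := fun h ↦ (hmax h).not_gt hxq
    have hlt : x < f q := hle.lt_of_ne fun h ↦ hxq.ne (f.injective (hfx.trans h))
    rcases hne.lt_or_gt with hq | hq
    · exact not_start (f q) q ⟨hlt, hq, by rwa [hfx], by rwa [hf q]⟩
    · exact not_start q (f q) ⟨hxq, hq, by rwa [hfx, hf q], by rwa [hf q]⟩
  refine isCut_of_forall_lt fun p q hp hq ↦ ?_
  replace hp : p ≤ x := by omega
  replace hq : x < q := by omega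
  by_contra! hle
  have hpx : p < x := hp.lt_of_ne (by rintro rfl; exact (hfx ▸ hle).not_gt (apply_lt q hq))
  have hpq : f p < f q := hle.lt_of_ne fun h ↦ (hpx.trans hq).ne (f.injective h)
  have hocc' : IsOcc132 f p x q := ⟨hpx, hq, hpq, by rw [hfx]; exact apply_lt q hq⟩
  have hend : q = f x := (eq_of_occ132_le_one hocc hocc' (hocc'.conj hf)).2.2
  exact hq.ne' (hend.trans hfx)

theorem IsCut.isGreatest {f : Perm (Fin n)} {x : Fin n} (hcut : IsCut f (x + 1)) (hx : f x = x) :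
    IsGreatest {i | f i = i} x := by
  refine ⟨hx, fun y hy ↦ ?_⟩
  by_contra! hxy
  have hlt := hcut.apply_lt_apply (p := x) (q := y) (by omega) (by omega)
  rw [hx, (hy : f y = y)] at hlt
  exact hlt.not_gt hxy

theorem IsInvolution.lt_apply_of_lt {f : Perm (Fin n)} (hf : IsInvolution f)
    (hocc : occ132 f = 0) {p q : Fin n} (hp : p < f p) (hqp : q < p) (hq : f q ≠ q) : q < f q := by
  by_contra! hle
  have hlt : f q < q := hle.lt_of_ne hq
  exact (occ132_pos (a := f q) (b := p) (c := f p)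
    ⟨hlt.trans hqp, hp, by rwa [hf q, hf p], by rwa [hf p]⟩).ne' hocc

theorem IsInvolution.two_mul_card_lt_apply {f : Perm (Fin n)} (hf : IsInvolution f)
    (hne : ∀ i, f i ≠ i) : 2 * #{p | p < f p} = n := by
  have hswap : #{p | ¬ p < f p} = #{p | p < f p} :=
    card_equiv f fun p ↦ by simp [hf p, (hne p).le_iff_lt]
  have hsplit := card_filter_add_card_filter_not (s := (univ : Finset (Fin n))) (fun p ↦ p < f p)
  rw [hswap, card_univ, Fintype.card_fin] at hsplit
  omega

/-- The positions `p < f p` form an initial segment, which is half of all positions. -/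
theorem IsInvolution.isCut_half {t : ℕ} {f : Perm (Fin (2 * t))} (hf : IsInvolution f)
    (hocc : occ132 f = 0) (hfix : fixedPts f = 0) : IsCut f t := by
  have hne : ∀ i, f i ≠ i := by simpa [fixedPts, filter_eq_empty_iff] using hfix
  have hcard := hf.two_mul_card_lt_apply hne
  have lower {p q : Fin (2 * t)} (hp : p < f p) (hqp : q ≤ p) : q < f q :=
    hqp.eq_or_lt.elim (fun h ↦ h ▸ hp) fun h ↦ hf.lt_apply_of_lt hocc hp h (hne q)
  have lt_iff (p : Fin (2 * t)) : (p : ℕ) < t ↔ p < f p := by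
    refine ⟨fun hpt ↦ ?_, fun hp ↦ ?_⟩
    · by_contra hp
      have hsub : ({q | q < f q} : Finset (Fin (2 * t))) ⊆ Iio p := fun q hq ↦
        mem_Iio.2 (lt_of_not_ge fun hpq ↦ hp (lower (by simpa using hq) hpq))
      have := card_le_card hsub
      rw [Fin.card_Iio] at this
      omega
    · have hsub : Iic p ⊆ ({q | q < f q} : Finset (Fin (2 * t))) := fun q hq ↦ by
        simpa using lower hp (mem_Iic.1 hq)
      have := card_le_card hsub
      rw [Fin.card_Iic] at this
      omega
  intro p
  have h₁ := lt_iff p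
  have h₂ := lt_iff (f p)
  rw [hf p] at h₂
  have := Fin.val_ne_of_ne (hne p)
  omega

theorem IsCut.fixedPts_eq_zero {t : ℕ} {f : Perm (Fin (2 * t))} (hcut : IsCut f t) :
    fixedPts f = 0 := by
  simp only [fixedPts, card_eq_zero, filter_eq_empty_iff, mem_univ, true_implies]
  intro i hi
  have := hcut i
  rw [hi] at this
  omega

theorem IsCut.apply_eq_self {t : ℕ} {f : Perm (Fin (2 * t + 1))} (hf : IsInvolution f)
    (hcut : IsCut f (t + 1)) {x : Fin (2 * t + 1)} (hx : (x : ℕ) = t) : f x = x := by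
  have h₁ := hcut x
  have h₂ := hcut (f x)
  rw [hf x] at h₂
  omega

/-! ### Inserting a fixed point or a transposition -/

/-- The permutation obtained from `h` by inserting the fixed point `x`. -/
def insertFixed (x : Fin (n + 1)) (h : Perm (Fin n)) : Perm (Fin (n + 1)) :=
  (finSuccEquiv' x).permCongr.symm (Equiv.optionCongr h)

section insertFixed

variable {x : Fin (n + 1)} {h : Perm (Fin n)}

@[simp]
theorem insertFixed_self (x : Fin (n + 1)) (h : Perm (Fin n)) : insertFixed x h x = x := by
  simp [insertFixed, Equiv.permCongr_symm]

@[simp]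
theorem insertFixed_succAbove (x : Fin (n + 1)) (h : Perm (Fin n)) (i : Fin n) :
    insertFixed x h (x.succAbove i) = x.succAbove (h i) := by
  simp [insertFixed, Equiv.permCongr_symm]

theorem insertFixed_injective (x : Fin (n + 1)) :
    Function.Injective (insertFixed x : Perm (Fin n) → Perm (Fin (n + 1))) :=
  (finSuccEquiv' x).permCongr.symm.injective.comp Equiv.optionCongr_injective

theorem exists_insertFixed_eq {f : Perm (Fin (n + 1))} (hx : f x = x) :
    ∃ h, insertFixed x h = f := by
  refine ⟨Equiv.removeNone ((finSuccEquiv' x).permCongr f), ?_⟩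
  have hnone : (finSuccEquiv' x).permCongr f none = none := by simp [Equiv.permCongr_apply, hx]
  rw [insertFixed, Equiv.symm_apply_eq, map_equiv_removeNone, hnone, Equiv.swap_self]
  exact one_mul _

@[simp]
theorem isInvolution_insertFixed : IsInvolution (insertFixed x h) ↔ IsInvolution h := by
  simp [IsInvolution, Fin.forall_iff_succAbove x]

@[simp]
theorem fixedPts_insertFixed (x : Fin (n + 1)) (h : Perm (Fin n)) :
    fixedPts (insertFixed x h) = fixedPts h + 1 := by
  simp only [fixedPts, card_filter, Fin.sum_univ_succAbove _ x, insertFixed_self,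
    insertFixed_succAbove, (Fin.succAbove_right_injective).eq_iff, if_true, add_comm]

theorem isCut_insertFixed : IsCut (insertFixed x h) (x + 1) ↔ n ≤ 2 * x ∧ IsCut h x := by
  simp only [IsCut, Fin.forall_iff_succAbove x, insertFixed_self, insertFixed_succAbove]
  have val_succAbove (i : Fin n) :
      (x.succAbove i : ℕ) = if (i : ℕ) < x then (i : ℕ) else i + 1 := by
    simp only [Fin.succAbove, Fin.lt_def, Fin.val_castSucc, apply_ite Fin.val, Fin.val_succ]
  have hself : ((x : ℕ) < x + 1 ↔ n + 1 ≤ x + (x + 1)) ↔ n ≤ 2 * x := by omega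
  have hrest (hx : n ≤ 2 * x) (i : Fin n) :
      ((x.succAbove i : ℕ) < x + 1 ↔ n + 1 ≤ x.succAbove (h i) + (x + 1)) ↔
        ((i : ℕ) < x ↔ n ≤ h i + x) := by
    rw [val_succAbove, val_succAbove]
    grind
  grind

theorem IsCut.ne_of_isOcc132 {f : Perm (Fin n)} (hf : IsInvolution f) {x : Fin n}
    (hcut : IsCut f (x + 1)) (hx : f x = x) {a b c : Fin n} (h : IsOcc132 f a b c) :
    a ≠ x ∧ b ≠ x ∧ c ≠ x := by
  obtain ⟨hab, hbc, hac, hcb⟩ := h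
  refine ⟨?_, ?_, ?_⟩
  · rintro rfl
    exact hac.not_gt (hcut.apply_lt_apply (by omega) (by omega))
  · rintro rfl
    exact hac.not_gt (hcut.apply_lt_apply (by omega) (by omega))
  · rintro rfl
    rw [hx] at hac hcb
    have hba := hcut.apply_lt_apply (p := f a) (q := f b) (by omega) (by omega)
    rw [hf a, hf b] at hba
    exact hab.not_gt hba

theorem occ132_insertFixed (hh : IsInvolution h) (hcut : IsCut (insertFixed x h) (x + 1)) :
    occ132 (insertFixed x h) = occ132 h := by
  have hmap := occ132_eq_add_of_map (e := Fin.succAboveOrderEmb x) (insertFixed_succAbove x h)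
    (s := ∅) fun a b c ↦ by
      have hne := hcut.ne_of_isOcc132 (isInvolution_insertFixed.2 hh) (insertFixed_self x h)
        (a := a) (b := b) (c := c)
      simpa [Fin.range_succAbove] using hne
  simpa using hmap

end insertFixed

/-- The permutation obtained from `h` by inserting a new last position and a new position `j`
which are exchanged. -/
def insertPair (j : Fin (n + 1)) (h : Perm (Fin n)) : Perm (Fin (n + 2)) :=
  Equiv.swap j.castSucc (Fin.last _) * insertFixed (Fin.last _) (insertFixed j h)

/-- The embedding of the positions of `h` into those of `insertPair j h`. -/
def pairEmb (j : Fin (n + 1)) : Fin n ↪o Fin (n + 2) :=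
  (Fin.succAboveOrderEmb j).trans Fin.castSuccOrderEmb

section insertPair

variable {j : Fin (n + 1)} {h : Perm (Fin n)}

theorem pairEmb_apply (j : Fin (n + 1)) (i : Fin n) :
    pairEmb j i = (j.succAbove i).castSucc :=
  rfl

theorem pairEmb_lt_castSucc_iff {i : Fin n} : pairEmb j i < j.castSucc ↔ (i : ℕ) < j := by
  rw [pairEmb_apply, Fin.castSucc_lt_castSucc_iff, Fin.succAbove_lt_iff_castSucc_lt]
  rfl

theorem castSucc_lt_pairEmb_iff {i : Fin n} : j.castSucc < pairEmb j i ↔ (j : ℕ) ≤ i := by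
  rw [pairEmb_apply, Fin.castSucc_lt_castSucc_iff, Fin.lt_succAbove_iff_le_castSucc]
  rfl

@[simp]
theorem pairEmb_lt_last (j : Fin (n + 1)) (i : Fin n) : pairEmb j i < Fin.last _ :=
  Fin.castSucc_lt_last _

theorem forall_iff_pairEmb (j : Fin (n + 1)) {P : Fin (n + 2) → Prop} :
    (∀ i, P i) ↔ (∀ i, P (pairEmb j i)) ∧ P j.castSucc ∧ P (Fin.last _) := by
  rw [Fin.forall_fin_succ', Fin.forall_iff_succAbove j]
  simp only [pairEmb_apply]
  tauto

theorem mem_range_pairEmb {a : Fin (n + 2)} :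
    a ∈ Set.range (pairEmb j) ↔ a ≠ j.castSucc ∧ a ≠ Fin.last _ := by
  revert a
  simp [forall_iff_pairEmb j, pairEmb_apply]

@[simp]
theorem insertPair_castSucc (j : Fin (n + 1)) (h : Perm (Fin n)) :
    insertPair j h j.castSucc = Fin.last _ := by
  have := insertFixed_succAbove (Fin.last (n + 1)) (insertFixed j h) j
  simp_all [insertPair]

@[simp]
theorem insertPair_last (j : Fin (n + 1)) (h : Perm (Fin n)) :
    insertPair j h (Fin.last _) = j.castSucc := by
  simp [insertPair]

@[simp]
theorem insertPair_pairEmb (j : Fin (n + 1)) (h : Perm (Fin n)) (i : Fin n) :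
    insertPair j h (pairEmb j i) = pairEmb j (h i) := by
  have := insertFixed_succAbove (Fin.last (n + 1)) (insertFixed j h) (j.succAbove i)
  rw [Fin.succAbove_last] at this
  rw [insertPair, Perm.mul_apply, pairEmb_apply, this, insertFixed_succAbove]
  exact Equiv.swap_apply_of_ne_of_ne (by simp) (Fin.castSucc_ne_last _)

theorem insertPair_injective (j : Fin (n + 1)) :
    Function.Injective (insertPair j : Perm (Fin n) → Perm (Fin (n + 2))) :=
  (mul_right_injective _).comp ((insertFixed_injective _).comp (insertFixed_injective j))

theorem exists_insertPair_eq {f : Perm (Fin (n + 2))} (hf : IsInvolution f)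
    (hj : f (Fin.last _) = j.castSucc) : ∃ h, insertPair j h = f := by
  have hlast : (Equiv.swap j.castSucc (Fin.last _) * f) (Fin.last _) = Fin.last _ := by simp [hj]
  obtain ⟨g, hg⟩ := exists_insertFixed_eq hlast
  have hgj : g j = j := by
    have := insertFixed_succAbove (Fin.last (n + 1)) g j
    rw [hg, Fin.succAbove_last, Perm.mul_apply, ← hj, hf] at this
    simpa [hj] using this.symm
  obtain ⟨h, rfl⟩ := exists_insertFixed_eq hgj
  exact ⟨h, by rw [insertPair, hg, Equiv.swap_mul_self_mul]⟩

@[simp]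
theorem isInvolution_insertPair : IsInvolution (insertPair j h) ↔ IsInvolution h := by
  simp [IsInvolution, forall_iff_pairEmb j]

@[simp]
theorem fixedPts_insertPair (j : Fin (n + 1)) (h : Perm (Fin n)) :
    fixedPts (insertPair j h) = fixedPts h := by
  simp only [fixedPts, card_filter, Fin.sum_univ_castSucc (n := n + 1),
    Fin.sum_univ_succAbove _ j, ← pairEmb_apply]
  simp [Fin.castSucc_ne_last, (Fin.castSucc_ne_last j).symm]

theorem isCut_of_occ132_insertPair_le_one (hh : IsInvolution h)
    (hocc : occ132 (insertPair j h) ≤ 1) : IsCut h j := by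
  refine isCut_of_forall_lt fun p q hp hq ↦ ?_
  by_contra! hle
  have hpq : h p < h q := hle.lt_of_ne fun heq ↦ by
    have := h.injective heq
    omega
  have hpjq : IsOcc132 (insertPair j h) (pairEmb j p) j.castSucc (pairEmb j q) := by
    simp [IsOcc132, pairEmb_lt_castSucc_iff, castSucc_lt_pairEmb_iff, hp, hq, hpq]
  have hend := (eq_of_occ132_le_one hocc hpjq (hpjq.conj (isInvolution_insertPair.2 hh))).2.2
  rw [insertPair_castSucc] at hend
  exact Fin.castSucc_ne_last _ hend

theorem isOcc132_insertPair_castSucc_last (hh : IsInvolution h) (hcut : IsCut h j)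
    {a : Fin (n + 2)} :
    IsOcc132 (insertPair j h) a j.castSucc (Fin.last _) ↔ n ≤ a + j ∧ a < j.castSucc := by
  simp only [IsOcc132, insertPair_castSucc, insertPair_last, Fin.castSucc_lt_last, true_and,
    and_true, and_comm (b := a < _)]
  refine and_congr_right fun haj ↦ ?_
  obtain ⟨p, rfl⟩ := mem_range_pairEmb.2 ⟨haj.ne, (haj.trans (Fin.castSucc_lt_last j)).ne⟩
  rw [pairEmb_lt_castSucc_iff] at haj
  have hval : (pairEmb j p : ℕ) = p :=
    congrArg Fin.val (Fin.succAbove_of_castSucc_lt j p haj)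
  rw [insertPair_pairEmb, pairEmb_lt_castSucc_iff, hval, hcut (h p), hh p]

theorem IsCut.eq_of_isOcc132_insertPair (hh : IsInvolution h) (hcut : IsCut h j)
    {a b c : Fin (n + 2)} (hocc : IsOcc132 (insertPair j h) a b c)
    (hmeet : ¬ (a ∈ Set.range (pairEmb j) ∧ b ∈ Set.range (pairEmb j) ∧
      c ∈ Set.range (pairEmb j))) : b = j.castSucc ∧ c = Fin.last _ := by
  obtain ⟨hab, hbc, hac, hcb⟩ := hocc
  obtain ⟨p, rfl⟩ : a ∈ Set.range (pairEmb j) := by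
    refine mem_range_pairEmb.2 ⟨?_, (hab.trans_le (Fin.le_last b)).ne⟩
    rintro rfl
    exact hac.not_ge (insertPair_castSucc j h ▸ Fin.le_last _)
  have hcj : c ≠ j.castSucc := by
    rintro rfl
    exact hcb.not_ge (insertPair_castSucc j h ▸ Fin.le_last _)
  by_cases hbj : b = j.castSucc
  · refine ⟨hbj, by_contra fun hcl ↦ ?_⟩
    subst hbj
    obtain ⟨q, rfl⟩ := mem_range_pairEmb.2 ⟨hcj, hcl⟩
    have hqp := hcut.apply_lt_apply (pairEmb_lt_castSucc_iff.1 hab) (castSucc_lt_pairEmb_iff.1 hbc)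
    rw [insertPair_pairEmb, insertPair_pairEmb, (pairEmb j).lt_iff_lt] at hac
    exact hac.not_gt hqp
  · obtain ⟨q, rfl⟩ := mem_range_pairEmb.2 ⟨hbj, (hbc.trans_le (Fin.le_last c)).ne⟩
    obtain rfl : c = Fin.last _ := by
      by_contra hcl
      exact hmeet ⟨⟨p, rfl⟩, ⟨q, rfl⟩, mem_range_pairEmb.2 ⟨hcj, hcl⟩⟩
    rw [insertPair_last, insertPair_pairEmb, pairEmb_lt_castSucc_iff] at hac
    rw [insertPair_last, insertPair_pairEmb, castSucc_lt_pairEmb_iff] at hcb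
    have hqp := hcut.apply_lt_apply hac hcb
    rw [hh, hh, ← (pairEmb j).lt_iff_lt] at hqp
    exact absurd hab hqp.not_gt

theorem occ132_insertPair (hh : IsInvolution h) (hcut : IsCut h j) :
    occ132 (insertPair j h) = occ132 h + (2 * j - n) := by
  have hj : (j : ℕ) ≤ n := Nat.le_of_lt_succ j.isLt
  let start : Fin (n + 2) := ⟨n - j, by omega⟩
  have hstart (a : Fin (n + 2)) : start ≤ a ↔ n ≤ a + j := by grind
  rw [occ132_eq_add_of_map (insertPair_pairEmb j h)
    (s := Ico start j.castSucc ×ˢ {j.castSucc} ×ˢ {Fin.last _})]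
  · simp only [card_product, Fin.card_Ico, card_singleton]
    grind
  · intro a b c
    simp only [mem_product, mem_Ico, mem_singleton, hstart,
      ← isOcc132_insertPair_castSucc_last hh hcut]
    constructor
    · rintro ⟨hocc, rfl, rfl⟩
      exact ⟨hocc, fun hr ↦ (mem_range_pairEmb.1 hr.2.1).1 rfl⟩
    · rintro ⟨hocc, hmeet⟩
      obtain ⟨rfl, rfl⟩ := hcut.eq_of_isOcc132_insertPair hh hocc hmeet
      exact ⟨hocc, rfl, rfl⟩

end insertPair

/-! ### Recurrences for the number of involutions -/

open Classical in
/-- The finite set of involutions of `Fin n` with `c` occurrences of 132 and `k` fixed points. -/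
noncomputable def involutions132 (n c k : ℕ) : Finset (Perm (Fin n)) :=
  {f | IsInvolution f ∧ occ132 f = c ∧ fixedPts f = k}

@[simp]
theorem mem_involutions132 {f : Perm (Fin n)} {c k : ℕ} :
    f ∈ involutions132 n c k ↔ IsInvolution f ∧ occ132 f = c ∧ fixedPts f = k := by
  simp [involutions132]

theorem iCountOnce132_eq_card (n k : ℕ) : iCountOnce132 n k = #(involutions132 n 1 k) :=
  Nat.subtype_card _ fun _ ↦ mem_involutions132

theorem involutions132_eq_empty_of_odd {k : ℕ} (hodd : Odd (n + k)) (c : ℕ) :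
    involutions132 n c k = ∅ := by
  refine eq_empty_of_forall_notMem fun f hf ↦ ?_
  obtain ⟨hinv, -, rfl⟩ := mem_involutions132.1 hf
  exact Nat.not_even_iff_odd.2 hodd hinv.even_add_fixedPts

theorem involutions132_one_zero (n : ℕ) : involutions132 n 1 0 = ∅ := by
  refine eq_empty_of_forall_notMem fun f hf ↦ ?_
  obtain ⟨hinv, hocc, hfix⟩ := mem_involutions132.1 hf
  exact (fixedPts_pos_of_occ132_eq_one hinv hocc).ne' hfix

theorem occ132_eq_zero (hn : n ≤ 2) (f : Perm (Fin n)) : occ132 f = 0 := by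
  rw [← card_occurrences132, card_eq_zero]
  refine eq_empty_of_forall_notMem fun ⟨a, b, c⟩ habc ↦ ?_
  obtain ⟨hab, hbc, -⟩ := mem_occurrences132.1 habc
  omega

variable {c k : ℕ}

theorem card_involutions132_filter_isCut (x : Fin (n + 1)) :
    #{f ∈ involutions132 (n + 1) c (k + 1) | f x = x ∧ IsCut f (x + 1)} =
      #{h ∈ involutions132 n c k | n ≤ 2 * x ∧ IsCut h x} := by
  symm
  refine card_nbij (insertFixed x) (fun h hh ↦ ?_) (insertFixed_injective x).injOn fun f hf ↦ ?_
  · obtain ⟨⟨hinv, hocc, hfix⟩, hcut⟩ := by simpa using hh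
    rw [← isCut_insertFixed] at hcut
    simp [hinv, hfix, hcut, occ132_insertFixed hinv hcut, hocc]
  · obtain ⟨⟨hinv, hocc, hfix⟩, hx, hcut⟩ := by simpa using hf
    obtain ⟨h, rfl⟩ := exists_insertFixed_eq hx
    rw [isInvolution_insertFixed] at hinv
    rw [occ132_insertFixed hinv hcut] at hocc
    refine ⟨h, ?_, rfl⟩
    simpa [hinv, hocc, ← isCut_insertFixed, hcut] using hfix

theorem IsInvolution.isGreatest_iff_isCut {f : Perm (Fin n)} (hf : IsInvolution f)
    (hocc : occ132 f ≤ 1) (hlt : occ132 f < fixedPts f) {x : Fin n} :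
    IsGreatest {i | f i = i} x ↔ f x = x ∧ IsCut f (x + 1) :=
  ⟨fun hx ↦ ⟨hx.1, hf.isCut_of_isGreatest hocc hlt hx⟩, fun hx ↦ hx.2.isGreatest hx.1⟩

theorem card_involutions132_succ_succ (hc : c ≤ 1) (hck : c ≤ k) :
    #(involutions132 (n + 1) c (k + 1)) =
      ∑ j : Fin (n + 1), #{h ∈ involutions132 n c k | 2 * j ≤ n ∧ IsCut h j} := by
  have hunique : ∀ f ∈ involutions132 (n + 1) c (k + 1), #{x | f x = x ∧ IsCut f (x + 1)} = 1 := by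
    intro f hf
    obtain ⟨hinv, rfl, hfix⟩ := mem_involutions132.1 hf
    have hne : ({i | f i = i} : Finset (Fin (n + 1))).Nonempty := card_pos.1 (by
      change 0 < fixedPts f
      omega)
    have hgreatest := isGreatest_max' _ hne
    rw [coe_filter_univ] at hgreatest
    rw [card_eq_one, singleton_iff_unique_mem]
    simp only [mem_filter_univ, ← hinv.isGreatest_iff_isCut hc (by omega)]
    exact ⟨_, hgreatest, fun y hy ↦ hy.unique hgreatest⟩
  calc
    #(involutions132 (n + 1) c (k + 1))
      = ∑ f ∈ involutions132 (n + 1) c (k + 1), #{x | f x = x ∧ IsCut f (x + 1)} := by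
        rw [card_eq_sum_ones, sum_congr rfl hunique]
    _ = ∑ x, #{f ∈ involutions132 (n + 1) c (k + 1) | f x = x ∧ IsCut f (x + 1)} :=
        sum_card_bipartiteAbove_eq_sum_card_bipartiteBelow _
    _ = ∑ x : Fin (n + 1), #{h ∈ involutions132 n c k | n ≤ 2 * x ∧ IsCut h x} := by
        simp only [card_involutions132_filter_isCut]
    _ = ∑ j : Fin (n + 1), #{h ∈ involutions132 n c k | 2 * j ≤ n ∧ IsCut h j} := by
        rw [← Equiv.sum_comp Fin.revPerm
          fun j : Fin (n + 1) ↦ #{h ∈ involutions132 n c k | 2 * (j : ℕ) ≤ n ∧ IsCut h j}]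
        refine sum_congr rfl fun x _ ↦ congrArg card (filter_congr fun h hh ↦ ?_)
        have hrev : (Fin.revPerm x : ℕ) = n - x := by simp
        rw [hrev, isCut_compl_iff (mem_involutions132.1 hh).1]
        exact and_congr_left' (by omega)

theorem card_filter_apply_last_eq_last :
    #{f ∈ involutions132 (n + 1) c (k + 1) | f (Fin.last n) = Fin.last n} =
      #(involutions132 n c k) := by
  simpa [isCut_self, two_mul] using
    card_involutions132_filter_isCut (c := c) (k := k) (Fin.last n)

theorem insertPair_mem_involutions132_iff (hc : c ≤ 1) {j : Fin (n + 1)} {h : Perm (Fin n)} :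
    insertPair j h ∈ involutions132 (n + 2) c k ↔
      (h ∈ involutions132 n c k ∧ 2 * j ≤ n ∧ IsCut h j) ∨
      (h ∈ involutions132 n 0 k ∧ c = 1 ∧ 2 * j = n + 1 ∧ IsCut h j) := by
  simp only [mem_involutions132, isInvolution_insertPair, fixedPts_insertPair]
  constructor
  · rintro ⟨hh, hocc, hfix⟩
    have hcut := isCut_of_occ132_insertPair_le_one hh (hocc.trans_le hc)
    rw [occ132_insertPair hh hcut] at hocc
    simp only [hh, hcut, hfix, true_and, and_true]
    omega
  · rintro (⟨⟨hh, hocc, hfix⟩, hj, hcut⟩ | ⟨⟨hh, hocc, hfix⟩, hc', hj, hcut⟩) <;>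
    · rw [occ132_insertPair hh hcut]
      exact ⟨hh, by omega, hfix⟩

theorem card_filter_apply_last_eq_castSucc (hc : c ≤ 1) (j : Fin (n + 1)) :
    #{f ∈ involutions132 (n + 2) c k | f (Fin.last _) = j.castSucc} =
      #{h ∈ involutions132 n c k | 2 * j ≤ n ∧ IsCut h j} +
      #{h ∈ involutions132 n 0 k | c = 1 ∧ 2 * j = n + 1 ∧ IsCut h j} := by
  classical
  rw [← card_union_of_disjoint (disjoint_left.2 fun h hh hh' ↦ by
    have := (mem_filter.1 hh).2.1
    have := (mem_filter.1 hh').2.2.1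
    omega)]
  symm
  refine card_nbij (insertPair j) (fun h hh ↦ ?_) (insertPair_injective j).injOn fun f hf ↦ ?_
  · have hmem := (insertPair_mem_involutions132_iff hc).2 (by
      simpa only [coe_union, Set.mem_union, mem_coe, mem_filter] using hh)
    simpa using hmem
  · obtain ⟨hmem, hlast⟩ := mem_filter.1 hf
    obtain ⟨h, rfl⟩ := exists_insertPair_eq (mem_involutions132.1 hmem).1 hlast
    exact ⟨h, by simpa using (insertPair_mem_involutions132_iff hc).1 hmem, rfl⟩

theorem card_involutions132_add_two (hc : c ≤ 1) (hck : c ≤ k) :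
    #(involutions132 (n + 2) c k) =
      #{f ∈ involutions132 (n + 2) c k | f (Fin.last _) = Fin.last _} +
      #(involutions132 (n + 1) c (k + 1)) +
      ∑ j : Fin (n + 1), #{h ∈ involutions132 n 0 k | c = 1 ∧ 2 * j = n + 1 ∧ IsCut h j} := by
  rw [card_eq_sum_card_fiberwise (f := fun f ↦ f (Fin.last _)) (t := univ) (by simp [Set.MapsTo]),
    Fin.sum_univ_castSucc, sum_congr rfl fun j _ ↦ card_filter_apply_last_eq_castSucc hc j,
    sum_add_distrib, card_involutions132_succ_succ hc hck]
  ring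

theorem card_involutions132_zero_add_two_zero (n : ℕ) :
    #(involutions132 (n + 2) 0 0) = #(involutions132 (n + 1) 0 1) := by
  have hlast : ∀ f ∈ involutions132 (n + 2) 0 0, f (Fin.last _) ≠ Fin.last _ := by
    intro f hf
    have hfix : ∀ i, f i ≠ i := by
      simpa [fixedPts, filter_eq_empty_iff] using (mem_involutions132.1 hf).2.2
    exact hfix _
  rw [card_involutions132_add_two zero_le_one le_rfl, filter_false_of_mem hlast]
  simp

theorem card_involutions132_zero_add_two_succ (n k : ℕ) :
    #(involutions132 (n + 2) 0 (k + 1)) =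
      #(involutions132 (n + 1) 0 k) + #(involutions132 (n + 1) 0 (k + 2)) := by
  rw [card_involutions132_add_two zero_le_one (Nat.zero_le _), card_filter_apply_last_eq_last]
  simp

theorem sum_card_filter_centre (n k : ℕ) :
    ∑ j : Fin (n + 2), #{h ∈ involutions132 (n + 1) 0 (k + 1) | 2 * (j : ℕ) = n + 2 ∧ IsCut h j} =
      if k = 0 then #(involutions132 n 0 0) else 0 := by
  obtain ⟨t, rfl | rfl⟩ := n.even_or_odd'
  · let x : Fin (2 * t + 1) := ⟨t, by omega⟩
    calc
      _ = #{h ∈ involutions132 (2 * t + 1) 0 (k + 1) | IsCut h (t + 1)} := by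
        rw [sum_eq_single x.succ]
        · simp [x, mul_add]
        · intro j _ hj
          refine card_eq_zero.2 (filter_false_of_mem fun h _ hcut ↦ hj (Fin.ext ?_))
          simp only [x, Fin.succ_mk]
          omega
        · simp
      _ = #{f ∈ involutions132 (2 * t + 1) 0 (k + 1) | f x = x ∧ IsCut f (x + 1)} := by
        refine congrArg card (filter_congr fun f hf ↦ ?_)
        simpa [x] using fun hcut ↦ hcut.apply_eq_self (mem_involutions132.1 hf).1 rfl
      _ = #{h ∈ involutions132 (2 * t) 0 k | 2 * t ≤ 2 * x ∧ IsCut h x} :=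
        card_involutions132_filter_isCut x
      _ = if k = 0 then #(involutions132 (2 * t) 0 0) else 0 := by
        split_ifs with hk
        · subst hk
          refine congrArg card (filter_true_of_mem fun h hh ↦ ⟨le_rfl, ?_⟩)
          obtain ⟨hinv, hocc, hfix⟩ := mem_involutions132.1 hh
          exact hinv.isCut_half hocc hfix
        · rw [card_eq_zero, filter_eq_empty_iff]
          rintro h hh ⟨-, hcut⟩
          exact hk ((mem_involutions132.1 hh).2.2 ▸ hcut.fixedPts_eq_zero)
  · rw [involutions132_eq_empty_of_odd (n := 2 * t + 1) (by simp) 0, card_empty, ite_self]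
    refine sum_eq_zero fun j _ ↦ card_eq_zero.2 (filter_false_of_mem fun h _ hj ↦ ?_)
    omega

theorem card_involutions132_one_add_three_succ (n k : ℕ) :
    #(involutions132 (n + 3) 1 (k + 1)) =
      #(involutions132 (n + 2) 1 k) + #(involutions132 (n + 2) 1 (k + 2)) +
      if k = 0 then #(involutions132 n 0 0) else 0 := by
  rw [card_involutions132_add_two le_rfl (Nat.le_add_left 1 k), card_filter_apply_last_eq_last,
    ← sum_card_filter_centre]
  simp

/-! ### Ballot numbers -/

/-- The ballot numbers: `ballot m k` counts the `m`-step paths with steps `±1` in `ℕ` which start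
at height `0` and end at height `k`. -/
def ballot : ℕ → ℕ → ℕ
  | 0, 0 => 1
  | 0, _ + 1 => 0
  | m + 1, 0 => ballot m 1
  | m + 1, k + 1 => ballot m k + ballot m (k + 2)

theorem card_involutions132_fin_zero (k : ℕ) : #(involutions132 0 0 k) = ballot 0 k := by
  cases k with
  | zero => simp [involutions132, ballot, IsInvolution, fixedPts, occ132_eq_zero]
  | succ k => simp [involutions132, ballot, fixedPts]

theorem card_involutions132_fin_one (k : ℕ) : #(involutions132 1 0 k) = ballot 1 k := by
  cases k with
  | zero => rw [involutions132_eq_empty_of_odd (by simp) 0, card_empty, ballot, ballot]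
  | succ k =>
    have hlast := card_filter_apply_last_eq_last (n := 0) (c := 0) (k := k)
    rw [filter_true_of_mem fun f _ ↦ Fin.eq_zero (f 0), card_involutions132_fin_zero] at hlast
    rw [hlast, ballot, ballot, add_zero]

theorem card_involutions132_zero (n k : ℕ) : #(involutions132 n 0 k) = ballot n k := by
  induction n using Nat.twoStepInduction generalizing k with
  | zero => exact card_involutions132_fin_zero k
  | one => exact card_involutions132_fin_one k
  | more n _ ih =>
    cases k with
    | zero => rw [card_involutions132_zero_add_two_zero, ih, ballot]
    | succ k => simp only [card_involutions132_zero_add_two_succ, ih, ballot]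

theorem card_involutions132_one (n k : ℕ) :
    #(involutions132 (n + 2) 1 (k + 1)) = ballot n (k + 1) := by
  induction n generalizing k with
  | zero => simp [involutions132, occ132_eq_zero, ballot]
  | succ n ih =>
    rw [card_involutions132_one_add_three_succ, ih, card_involutions132_zero]
    cases k with
    | zero => simp [involutions132_one_zero, ballot, add_comm]
    | succ k => simp [ih, ballot]

theorem ballot_add_choose {m k s : ℕ} (h : m + k = 2 * s) :
    ballot m k + m.choose (s + 1) = m.choose s := by
  induction m generalizing k s with
  | zero => cases k <;> cases s <;> simp_all [ballot]
  | succ m ih =>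
    obtain ⟨s, rfl⟩ : ∃ r, s = r + 1 := Nat.exists_eq_add_one.2 (by omega)
    rw [Nat.choose_succ_succ' m (s + 1), Nat.choose_succ_succ' m s]
    cases k with
    | zero =>
      obtain rfl : m = 2 * s + 1 := by omega
      have := ih (k := 1) (s := s + 1) (by omega)
      have := Nat.choose_symm_half s
      rw [ballot]
      omega
    | succ k =>
      have := ih (k := k) (s := s) (by omega)
      have := ih (k := k + 2) (s := s + 1) (by omega)
      rw [ballot]
      omega

theorem succ_mul_ballot {m k s : ℕ} (h : m + k = 2 * s) :
    (m + 1) * ballot m k = (k + 1) * (m + 1).choose (s + 1) := by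
  have hballot := ballot_add_choose h
  rcases lt_or_ge m s with hms | hsm
  · rw [Nat.choose_eq_zero_of_lt hms] at hballot
    rw [Nat.choose_eq_zero_of_lt (by omega), Nat.eq_zero_of_add_eq_zero_right hballot, mul_zero,
      mul_zero]
  · obtain ⟨d, rfl⟩ := Nat.exists_eq_add_of_le hsm
    obtain rfl : s = d + k := by omega
    have hs := Nat.add_one_mul_choose_eq (d + k + d) (d + k)
    have hs' := Nat.choose_mul_succ_eq (d + k + d) (d + k + 1)
    rw [show d + k + d + 1 - (d + k + 1) = d by omega] at hs'
    rw [← hballot] at hs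
    linarith

end

/-- For all `n ≥ 3` and `1 ≤ k ≤ n` with `n + k` even,
`(n-1) · i_n^k(∅;132) = (k+1) · C(n-1, (n+k)/2)`; when `k = 0` or `n + k` is odd,
`i_n^k(∅;132) = 0`. -/
theorem statement12 (n k : ℕ) (hn : 3 ≤ n) (hk : k ≤ n) :
    (1 ≤ k → Even (n + k) →
      (n - 1) * iCountOnce132 n k = (k + 1) * (n - 1).choose ((n + k) / 2)) ∧
    (k = 0 ∨ Odd (n + k) → iCountOnce132 n k = 0) := by
  rw [iCountOnce132_eq_card]
  constructor
  · intro hpos heven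
    obtain ⟨m, rfl⟩ := Nat.exists_eq_add_of_le' (Nat.le_of_succ_le hn)
    obtain ⟨k, rfl⟩ := Nat.exists_eq_add_of_le' hpos
    obtain ⟨s, hs⟩ := heven
    have hhalf : (m + 2 + (k + 1)) / 2 = s - 1 + 1 := by omega
    rw [card_involutions132_one, hhalf]
    exact succ_mul_ballot (by omega)
  · rintro (rfl | hodd)
    · rw [involutions132_one_zero, Finset.card_empty]
    · rw [involutions132_eq_empty_of_odd hodd, Finset.card_empty]
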